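/- At τ = τ* and ε = ε*: D_1(0; τ*, ε*) = 0, D_0(iω*; τ*) = D_0(−iω*; τ*) = 0, and these are the only characteristic roots in the closed right half plane; i.e., for every k ∈ ℕ₀ and every λ ∈ ℂ with Re λ ≥ 0 and D_k(λ; τ*, ε*) = 0, either k = 1 and λ = 0, or k = 0 and λ = iω* or λ = −iω*. Moreover the root 0 of D_1 and the roots ±iω* of D_0 are simple. -/

import Mathlib

/-- `p_k` coefficient of the `k`-th mode characteristic function. -/
noncomputable def pk (ε : ℝ) (k : ℕ) : ℝ := 4 * (ε + 1) * (k : ℝ) ^ 2 * Real.pi ^ 2 + 1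

/-- `r_k` coefficient of the `k`-th mode characteristic function. -/
noncomputable def rk (ε : ℝ) (k : ℕ) : ℝ :=
  16 * ε * (k : ℝ) ^ 4 * Real.pi ^ 4 + 4 * (k : ℝ) ^ 2 * Real.pi ^ 2

/-- `s_k` coefficient of the `k`-th mode characteristic function. -/
noncomputable def sk : ℝ := 23 / 3

/-- `q_k` coefficient of the `k`-th mode characteristic function. -/
noncomputable def qk (ε : ℝ) (k : ℕ) : ℝ :=
  4 * (9 * ε - 4 / 3) * (k : ℝ) ^ 2 * Real.pi ^ 2 + 9

/-- The `k`-th mode characteristic function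
`D_k(λ; τ, ε) = λ² + p_k λ + r_k + (s_k λ + q_k) e^{-λτ}`. -/
noncomputable def Dk (ε τ : ℝ) (k : ℕ) (z : ℂ) : ℂ :=
  z ^ 2 + (pk ε k : ℂ) * z + (rk ε k : ℂ) +
    ((sk : ℂ) * z + (qk ε k : ℂ)) * Complex.exp (-z * (τ : ℂ))

/-- The critical diffusion ratio `ε* = (4π²/3 - 9)/(16π⁴ + 36π²)`. -/
noncomputable def epsStar : ℝ := (4 * Real.pi ^ 2 / 3 - 9) / (16 * Real.pi ^ 4 + 36 * Real.pi ^ 2)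

/-- The zeroth-mode characteristic function `D_0(λ; τ) = λ² + λ + ((23/3)λ + 9)e^{-λτ}`. -/
noncomputable def D0 (τ : ℝ) (z : ℂ) : ℂ :=
  z ^ 2 + z + ((23 / 3 : ℂ) * z + 9) * Complex.exp (-z * (τ : ℂ))

/-- The critical Hopf frequency `ω* = √((520 + √296644)/18)`. -/
noncomputable def omegaStar : ℝ := Real.sqrt ((520 + Real.sqrt 296644) / 18)

open Complex in
lemma aux_norm (p r s q τ : ℝ) (z : ℂ)
    (h : z ^ 2 + (p : ℂ) * z + (r : ℂ) + ((s : ℂ) * z + (q : ℂ)) * Complex.exp (-z * (τ : ℂ)) = 0) :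
    (z.re ^ 2 - z.im ^ 2 + p * z.re + r) ^ 2 + (2 * z.re * z.im + p * z.im) ^ 2 =
      ((s * z.re + q) ^ 2 + (s * z.im) ^ 2) * Real.exp (-(z.re * τ)) ^ 2 := by
  have h1 : z ^ 2 + (p : ℂ) * z + (r : ℂ) = -(((s : ℂ) * z + (q : ℂ)) * Complex.exp (-z * (τ : ℂ))) :=
    eq_neg_of_add_eq_zero_left h
  have h2 := congrArg Complex.normSq h1
  rw [Complex.normSq_neg, Complex.normSq_mul, Complex.normSq_eq_norm_sq (Complex.exp _),
    Complex.norm_exp] at h2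
  simp only [Complex.normSq_apply, pow_two, Complex.add_re, Complex.add_im, Complex.mul_re,
    Complex.mul_im, Complex.ofReal_re, Complex.ofReal_im, Complex.neg_re, Complex.neg_im] at h2
  have e : -z.re * τ - -z.im * 0 = -(z.re * τ) := by ring
  rw [e] at h2
  linear_combination h2

lemma aux_modes (p r s q τ : ℝ) (z : ℂ) (ha : 0 ≤ z.re) (hτ : 0 ≤ τ)
    (hs : 0 ≤ s) (hr : 0 ≤ r) (hp : 0 ≤ p) (hq : q ≤ 0) (h1 : 0 < p ^ 2 - 2 * r - s ^ 2)
    (h2 : 0 ≤ r ^ 2 - q ^ 2)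
    (h : z ^ 2 + (p : ℂ) * z + (r : ℂ) + ((s : ℂ) * z + (q : ℂ)) * Complex.exp (-z * (τ : ℂ)) = 0) :
    z = 0 ∧ r ^ 2 - q ^ 2 = 0 := by
  have h3 := aux_norm p r s q τ z h
  set a := z.re with hadef
  set b := z.im with hbdef
  have hE : Real.exp (-(a * τ)) ≤ 1 := by
    rw [Real.exp_le_one_iff]; nlinarith [mul_nonneg ha hτ]
  have hE0 := Real.exp_pos (-(a * τ))
  have hE2 : Real.exp (-(a * τ)) ^ 2 ≤ 1 := by nlinarith
  have h4 : (a ^ 2 - b ^ 2 + p * a + r) ^ 2 + (2 * a * b + p * b) ^ 2 ≤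
      (s * a + q) ^ 2 + (s * b) ^ 2 := by
    rw [h3]; exact mul_le_of_le_one_right (by positivity) hE2
  have e1 : 0 ≤ s * (-q) * a := by have := neg_nonneg.2 hq; positivity
  have e2 : 0 ≤ p * r * a := by positivity
  have e3 : 0 ≤ p * a * (a ^ 2 + b ^ 2) := by positivity
  have e4 : 0 ≤ r * a ^ 2 := by positivity
  have e5 : (a ^ 2 + b ^ 2) ^ 2 + (p ^ 2 - 2 * r - s ^ 2) * (a ^ 2 + b ^ 2) + (r ^ 2 - q ^ 2) ≤ 0 := by
    nlinarith
  have e6 : 0 ≤ (p ^ 2 - 2 * r - s ^ 2) * (a ^ 2 + b ^ 2) := by positivity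
  have e7 : (a ^ 2 + b ^ 2) ^ 2 ≤ 0 := by linarith
  have e8 : a ^ 2 + b ^ 2 = 0 := by
    have := sq_nonneg (a ^ 2 + b ^ 2)
    exact pow_eq_zero_iff (two_ne_zero) |>.1 (le_antisymm e7 this)
  refine ⟨Complex.ext ?_ ?_, ?_⟩
  · simp only [Complex.zero_re]; nlinarith [sq_nonneg a, sq_nonneg b]
  · simp only [Complex.zero_im]; nlinarith [sq_nonneg a, sq_nonneg b]
  · nlinarith [sq_nonneg (a ^ 2 + b ^ 2)]

lemma X_gt : 39.4 < 4 * Real.pi ^ 2 := by nlinarith [Real.pi_gt_d2]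

lemma eps_eq : epsStar * (4 * Real.pi ^ 2) * (4 * Real.pi ^ 2 + 9) = 4 * Real.pi ^ 2 / 3 - 9 := by
  unfold epsStar
  have := Real.pi_pos
  field_simp
  ring

lemma eps_pos : 0 < epsStar := by
  have h := eps_eq
  have hX := X_gt
  by_contra hc
  push Not at hc
  nlinarith [mul_nonneg (neg_nonneg.2 hc) (by positivity : 0 ≤ (4 * Real.pi ^ 2) * (4 * Real.pi ^ 2 + 9))]

lemma eps_lt : epsStar < 1 / 9 := by
  have h := eps_eq
  have hX := X_gt
  by_contra hc
  push Not at hc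
  nlinarith [mul_nonneg (sub_nonneg.2 hc) (by positivity : 0 ≤ (4 * Real.pi ^ 2) * (4 * Real.pi ^ 2 + 9))]

lemma mode_zero (τ : ℝ) (hτ : 0 ≤ τ) (k : ℕ) (hk : 1 ≤ k) (z : ℂ) (ha : 0 ≤ z.re)
    (h : Dk epsStar τ k z = 0) : k = 1 ∧ z = 0 := by
  have he := eps_eq
  have hX := X_gt
  have he0 := eps_pos
  have he1 := eps_lt
  obtain ⟨X, hXd⟩ : ∃ X, X = 4 * Real.pi ^ 2 := ⟨_, rfl⟩
  obtain ⟨x, hxd⟩ : ∃ x, x = (k : ℝ) ^ 2 * X := ⟨_, rfl⟩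
  obtain ⟨ε, hε⟩ : ∃ ε, ε = epsStar := ⟨_, rfl⟩
  have hp : pk epsStar k = (ε + 1) * x + 1 := by rw [pk, hxd, hXd, hε]; ring
  have hr : rk epsStar k = ε * x ^ 2 + x := by rw [rk, hxd, hXd, hε]; ring
  have hq : qk epsStar k = (9 * ε - 4 / 3) * x + 9 := by rw [qk, hxd, hXd, hε]; ring
  rw [← hXd, ← hε] at he
  rw [← hXd] at hX
  rw [← hε] at he0 he1
  have hk1 : (1 : ℝ) ≤ k := by exact_mod_cast hk
  have hX0 : 0 < X := by linarith
  have hxX : X ≤ x := by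
    rw [hxd]; exact le_mul_of_one_le_left hX0.le (one_le_pow₀ hk1)
  have hx0 : 0 < x := by linarith
  have hsum : X * (rk epsStar k + qk epsStar k) = (x - X) * (ε * x * X - 9) := by
    rw [hr, hq]
    linear_combination x * he
  have hdiff : 0 < rk epsStar k - qk epsStar k := by
    rw [hr, hq]
    nlinarith [mul_pos he0 (pow_pos hx0 2), mul_pos (sub_pos.2 he1) hx0]
  have hbig : 2 ≤ k → 0 < rk epsStar k + qk epsStar k := by
    intro hk2
    have hk2' : (2 : ℝ) ≤ k := by exact_mod_cast hk2
    have hx4 : 4 * X ≤ x := by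
      rw [hxd]; exact mul_le_mul_of_nonneg_right (by nlinarith) hX0.le
    have h1 : 9 < ε * X * (4 * X) := by
      by_contra hc
      push Not at hc
      nlinarith [mul_nonneg (sub_nonneg.2 hc) (by positivity : 0 ≤ X + 9)]
    have h2 : ε * X * (4 * X) ≤ ε * X * x := mul_le_mul_of_nonneg_left hx4 (by positivity)
    have h3 : 0 < (x - X) * (ε * x * X - 9) := mul_pos (by linarith) (by nlinarith)
    rw [← hsum] at h3
    exact pos_of_mul_pos_right h3 hX0.le
  have hsum0 : 0 ≤ rk epsStar k + qk epsStar k := by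
    rcases Nat.lt_or_ge 1 k with h2 | h2
    · exact (hbig h2).le
    · have : k = 1 := le_antisymm h2 hk
      have hx : x = X := by rw [hxd, this]; norm_num
      rw [hx, sub_self, zero_mul] at hsum
      rcases mul_eq_zero.1 hsum with h | h
      · linarith
      · exact h.ge
  have h2 : rk epsStar k ^ 2 - qk epsStar k ^ 2 =
      (rk epsStar k + qk epsStar k) * (rk epsStar k - qk epsStar k) := by ring
  have key := aux_modes (pk epsStar k) (rk epsStar k) sk (qk epsStar k) τ z ha hτ
    (by norm_num [sk]) (by rw [hr]; positivity) (by rw [hp]; positivity)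
    (by rw [hq]; nlinarith [mul_pos (sub_pos.2 he1) hx0])
    (by rw [hp, hr, sk]; nlinarith [mul_pos he0 hx0, sq_nonneg (ε * x)])
    (by rw [h2]; exact mul_nonneg hsum0 hdiff.le) h
  refine ⟨?_, key.1⟩
  by_contra hne
  have hk2 : 2 ≤ k := by omega
  have := mul_pos (hbig hk2) hdiff
  rw [← h2, key.2] at this
  exact lt_irrefl _ this

lemma om_sq : omegaStar ^ 2 = (520 + Real.sqrt 296644) / 18 :=
  Real.sq_sqrt (by positivity)

lemma om_pos : 0 < omegaStar := Real.sqrt_pos.2 (by positivity)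

lemma om_big : 59 < omegaStar ^ 2 := by
  rw [om_sq]
  have : 544 < Real.sqrt 296644 := by
    rw [Real.lt_sqrt (by norm_num)]; norm_num
  linarith

lemma om_eq : (omegaStar ^ 2) ^ 2 + omegaStar ^ 2 = (23 / 3) ^ 2 * omegaStar ^ 2 + 81 := by
  rw [om_sq]
  have := Real.sq_sqrt (by norm_num : (0:ℝ) ≤ 296644)
  nlinarith

/-- Real and imaginary parts of `z (z+1) conj(s z + 9) = - |s z + 9|² e^{-zτ}`. -/
lemma D0_parts (τ : ℝ) (z : ℂ) (h : D0 τ z = 0) :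
    (23 / 3 * (z.re ^ 2 + z.im ^ 2) * (z.re + 1) + 9 * (z.re ^ 2 - z.im ^ 2) + 9 * z.re =
      -(((23 / 3 * z.re + 9) ^ 2 + (23 / 3 * z.im) ^ 2) * Real.exp (-(z.re * τ)))
        * Real.cos (z.im * τ)) ∧
    (z.im * (23 / 3 * (z.re ^ 2 + z.im ^ 2) + 18 * z.re + 9) =
      (((23 / 3 * z.re + 9) ^ 2 + (23 / 3 * z.im) ^ 2) * Real.exp (-(z.re * τ)))
        * Real.sin (z.im * τ)) := by
  have hre := congrArg Complex.re h
  have him := congrArg Complex.im h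
  have c1 : ((23 / 3 : ℂ)).re = 23 / 3 := by norm_num
  have c2 : ((23 / 3 : ℂ)).im = 0 := by norm_num
  have c3 : ((9 : ℂ)).re = 9 := by norm_num
  have c4 : ((9 : ℂ)).im = 0 := by norm_num
  unfold D0 at hre him
  simp only [pow_two, Complex.add_re, Complex.add_im, Complex.mul_re, Complex.mul_im, c1, c2, c3, c4,
    Complex.exp_re, Complex.exp_im, Complex.zero_re, Complex.zero_im,
    Complex.ofReal_re, Complex.ofReal_im, Complex.neg_re, Complex.neg_im] at hre him
  have e1 : -z.re * τ - -z.im * 0 = -(z.re * τ) := by ring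
  have e2 : -z.re * 0 + -z.im * τ = -(z.im * τ) := by ring
  rw [e1, e2, Real.cos_neg, Real.sin_neg] at hre him
  constructor
  · linear_combination (23 / 3 * z.re + 9) * hre + (23 / 3 * z.im) * him
  · linear_combination (23 / 3 * z.re + 9) * him - (23 / 3 * z.im) * hre

/-- `t ∈ [0,1]`, `θ ∈ [0, π/2]`: `tan (tθ) ≤ t tan θ` without division. -/
lemma tan_conv (t θ : ℝ) (ht0 : 0 ≤ t) (ht1 : t ≤ 1) (hθ0 : 0 ≤ θ) (hθ1 : θ ≤ Real.pi / 2) :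
    Real.sin (t * θ) * Real.cos θ ≤ t * Real.sin θ * Real.cos (t * θ) := by
  have hpi := Real.pi_pos
  have h1 := strictConcaveOn_sin_Icc.concaveOn.2 (x := 0) ⟨le_rfl, hpi.le⟩ (y := θ)
    ⟨hθ0, by linarith⟩ ht0 (sub_nonneg.2 ht1) (by ring)
  simp only [smul_eq_mul, mul_zero, Real.sin_zero, zero_add] at h1
  have h2 : Real.sin ((1 - t) * θ) =
      Real.sin θ * Real.cos (t * θ) - Real.cos θ * Real.sin (t * θ) := by
    rw [← Real.sin_sub]; ring_nf
  have h3 : 0 ≤ Real.sin θ := Real.sin_nonneg_of_nonneg_of_le_pi hθ0 (by linarith)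
  have h4 := mul_nonneg (mul_nonneg (sub_nonneg.2 ht1) h3) (sub_nonneg.2 (Real.cos_le_one (t * θ)))
  nlinarith

lemma D0_conj (τ : ℝ) (z : ℂ) (h : D0 τ z = 0) : D0 τ ((starRingEnd ℂ) z) = 0 := by
  have := congrArg (starRingEnd ℂ) h
  unfold D0 at this ⊢
  simp only [map_add, map_mul, map_pow, map_div₀, map_ofNat, ← Complex.exp_conj, map_neg, Complex.conj_ofReal, map_zero] at this
  exact this

/-- consequences for the critical angle. -/
lemma theta_facts (τ : ℝ) (hmem : τ ∈ Set.Ioo 0 (2 * Real.pi / omegaStar))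
    (h : D0 τ (Complex.I * (omegaStar : ℂ)) = 0) :
    0 < omegaStar * τ ∧ omegaStar * τ < Real.pi / 2 ∧ 1 / 10 ≤ τ ∧
    4 / 3 * omegaStar * Real.sin (omegaStar * τ) =
      (23 / 3 * omegaStar ^ 2 + 9) * Real.cos (omegaStar * τ) ∧
    0 < Real.cos (omegaStar * τ) := by
  obtain ⟨h1, h2⟩ := D0_parts _ _ h
  simp only [Complex.mul_re, Complex.mul_im, Complex.I_re, Complex.I_im, Complex.ofReal_re,
    Complex.ofReal_im] at h1 h2
  norm_num at h1 h2
  have hw := om_pos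
  have ht0 := hmem.1
  have ht2 : omegaStar * τ < 2 * Real.pi := by
    have ht1 := hmem.2
    rw [lt_div_iff₀ hw] at ht1; linarith
  have hθ : 0 < omegaStar * τ := mul_pos hw ht0
  clear h hmem
  generalize omegaStar = w at *
  have hpi := Real.pi_pos
  have hR : 0 < 81 + (23 / 3 * w) ^ 2 := by positivity
  have hc : 0 < Real.cos (w * τ) := by
    refine pos_of_mul_pos_right (a := 81 + (23 / 3 * w) ^ 2) ?_ hR.le
    nlinarith
  have hs : 0 < Real.sin (w * τ) := by
    refine pos_of_mul_pos_right (a := 81 + (23 / 3 * w) ^ 2) ?_ hR.le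
    rw [← h2]; positivity
  have hltpi : w * τ < Real.pi := by
    by_contra hcon
    push Not at hcon
    have := Real.sin_nonneg_of_nonneg_of_le_pi (x := w * τ - Real.pi) (by linarith) (by linarith)
    rw [Real.sin_sub_pi] at this
    linarith
  have hlt : w * τ < Real.pi / 2 := by
    by_contra hcon
    push Not at hcon
    have := Real.cos_nonpos_of_pi_div_two_le_of_le hcon (by linarith)
    linarith
  refine ⟨hθ, hlt, ?_, ?_, hc⟩
  · have h3 := Real.sin_lt hθ
    have h4 : w * (23 / 3 * w ^ 2 + 9) ≤ (81 + (23 / 3 * w) ^ 2) * (w * τ) := by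
      rw [h2]; exact mul_le_mul_of_nonneg_left h3.le hR.le
    have h5 : (23 / 3 * w ^ 2 + 9) ≤ (81 + (23 / 3 * w) ^ 2) * τ := by
      refine le_of_mul_le_mul_left ?_ hw
      linarith
    by_contra hcon
    push Not at hcon
    nlinarith [mul_pos (sub_pos.2 hcon) hR]
  · have hRw : (81 + (23 / 3 * w) ^ 2) * w ≠ 0 := by positivity
    apply mul_left_cancel₀ hRw
    linear_combination (-(23 / 3 * w ^ 2 + 9)) * w * h1 - 4 / 3 * w ^ 2 * h2

lemma D0_upper (τ : ℝ) (hmem : τ ∈ Set.Ioo 0 (2 * Real.pi / omegaStar))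
    (h : D0 τ (Complex.I * (omegaStar : ℂ)) = 0) (z : ℂ) (ha : 0 ≤ z.re) (hb : 0 ≤ z.im)
    (hz : D0 τ z = 0) : z = Complex.I * (omegaStar : ℂ) := by
  obtain ⟨hθ0, hθ1, hτ, htan, hc⟩ := theta_facts τ hmem h
  obtain ⟨h1, h2⟩ := D0_parts _ _ hz
  have hn := aux_norm 1 0 (23 / 3) 9 τ z (by unfold D0 at hz; push_cast; simpa using hz)
  have hw := om_pos
  have hw2 := om_big
  have hw4 := om_eq
  suffices hs : z.re = 0 ∧ z.im = omegaStar by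
    apply Complex.ext <;> simp [hs.1, hs.2]
  clear h hmem
  generalize omegaStar = w at *
  set a := z.re
  set b := z.im
  have hE0 := Real.exp_pos (-(a * τ))
  set E := Real.exp (-(a * τ)) with hEd
  have hEE : E ^ 2 * (1 + 2 * a * τ) ≤ 1 := by
    have e1 : E ^ 2 = Real.exp (-(2 * a * τ)) := by
      rw [hEd, ← Real.exp_nat_mul]; congr 1; push_cast; ring
    have e2 := Real.add_one_le_exp (2 * a * τ)
    rw [e1]
    calc Real.exp (-(2 * a * τ)) * (1 + 2 * a * τ)
        ≤ Real.exp (-(2 * a * τ)) * Real.exp (2 * a * τ) :=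
          mul_le_mul_of_nonneg_left (by linarith) (Real.exp_pos _).le
      _ = 1 := by rw [← Real.exp_add]; simp
  have hτ0 : 0 < τ := by linarith
  -- the modulus bound
  have hbw : b ≤ w := by
    by_contra hcon
    push Not at hcon
    have hbb : w ^ 2 < b ^ 2 := by nlinarith
    obtain ⟨m, hm⟩ : ∃ m, m = a ^ 2 + b ^ 2 := ⟨_, rfl⟩
    have hmw : w ^ 2 < m := by linarith [sq_nonneg a]
    have hm59 : 59 < m := by linarith
    have n1 : m * (m + 2 * a + 1) = ((23 / 3) ^ 2 * m + 138 * a + 81) * E ^ 2 := by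
      rw [hm]; linear_combination hn
    have n2 : m * (m + 2 * a + 1) * (1 + 2 * a * τ) ≤ (23 / 3) ^ 2 * m + 138 * a + 81 := by
      rw [n1, mul_assoc]
      exact mul_le_of_le_one_right (by positivity) hEE
    have n3 : 0 < (m - w ^ 2) * (m + w ^ 2 + 1 - (23 / 3) ^ 2) := by
      apply mul_pos <;> linarith
    have n4 : (23 / 3) ^ 2 * m + 81 < m * (m + 1) := by linear_combination n3 - hw4
    have n5 : a * (1 / 10) ≤ a * τ := mul_le_mul_of_nonneg_left hτ ha
    have n6 : 0 ≤ m * (m + 2 * a + 1) * (a * τ - a * (1 / 10)) :=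
      mul_nonneg (by positivity) (by linarith)
    have n7 : 0 ≤ a * (m * m - 59 * 59) := mul_nonneg ha (by clear hn h1 h2 n1 n2 n3 n6; nlinarith)
    have n8 : 0 ≤ a * (m - 59) := mul_nonneg ha (by linarith)
    have n9 : 0 ≤ m * a * a := by positivity
    clear hn h1 h2 n1 hEE
    linarith
  rcases hb.eq_or_lt with hb0 | hb0
  · exfalso
    rw [← hb0] at h1
    norm_num at h1
    have : 0 < ((23 / 3 * a + 9) ^ 2) * E := by positivity
    have : 0 ≤ 23 / 3 * a ^ 2 * (a + 1) + 9 * a ^ 2 + 9 * a := by positivity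
    nlinarith
  · have ht := tan_conv (b / w) (w * τ) (by positivity) ((div_le_one hw).2 hbw) hθ0.le hθ1.le
    have e1 : b / w * (w * τ) = b * τ := by field_simp
    rw [e1] at ht
    set R := ((23 / 3 * a + 9) ^ 2 + (23 / 3 * b) ^ 2) * E with hR
    have hR0 : 0 < R := by positivity
    set S := Real.sin (b * τ)
    set C := Real.cos (b * τ)
    have ht2 : w * S * Real.cos (w * τ) ≤ b * Real.sin (w * τ) * C := by
      have := mul_le_mul_of_nonneg_left ht hw.le
      have e : w * (b / w * Real.sin (w * τ) * C) = b * Real.sin (w * τ) * C := by field_simp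
      rw [e] at this; linarith
    have ht3 : 4 / 3 * w ^ 2 * S ≤ b * (23 / 3 * w ^ 2 + 9) * C := by
      refine le_of_mul_le_mul_right ?_ hc
      have := mul_le_mul_of_nonneg_left ht2 (by positivity : 0 ≤ 4 / 3 * w)
      have e : 4 / 3 * w * (b * Real.sin (w * τ) * C) =
        b * (23 / 3 * w ^ 2 + 9) * C * Real.cos (w * τ) := by
        linear_combination b * C * htan
      rw [e] at this; linarith
    have ht4 := mul_le_mul_of_nonneg_left ht3 hR0.le
    have q1 : R * (4 / 3 * w ^ 2 * S) =
        4 / 3 * w ^ 2 * b * (23 / 3 * (a ^ 2 + b ^ 2) + 18 * a + 9) := by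
      linear_combination (-(4 / 3 * w ^ 2)) * h2
    have q2 : R * (b * (23 / 3 * w ^ 2 + 9) * C) = b * (23 / 3 * w ^ 2 + 9) *
        (4 / 3 * b ^ 2 - a * (23 / 3 * (a ^ 2 + b ^ 2) + 23 / 3 * a + 9 * a + 9)) := by
      linear_combination (b * (23 / 3 * w ^ 2 + 9)) * h1
    rw [q1, q2] at ht4
    have ht5 : 4 / 3 * w ^ 2 * (23 / 3 * (a ^ 2 + b ^ 2) + 18 * a + 9) ≤ (23 / 3 * w ^ 2 + 9) *
        (4 / 3 * b ^ 2 - a * (23 / 3 * (a ^ 2 + b ^ 2) + 23 / 3 * a + 9 * a + 9)) := by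
      refine le_of_mul_le_mul_left ?_ hb0
      linarith
    have hbw2 : b ^ 2 ≤ w ^ 2 := pow_le_pow_left₀ hb hbw 2
    have g1 : 0 ≤ w ^ 2 * a ^ 2 := by positivity
    have g2 : 0 ≤ (23 / 3 * w ^ 2 + 9) * (a * (23 / 3 * (a ^ 2 + b ^ 2) + 23 / 3 * a + 9 * a + 9)) := by
      positivity
    clear ht4 q1 q2 h1 h2 hn ht ht2 ht3 hEE
    have g4 : 0 ≤ w ^ 2 * a := by positivity
    have g3 : w ^ 2 * a ≤ 0 := by linarith
    have ha0 : a = 0 := by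
      have : w ^ 2 * a = 0 := le_antisymm g3 g4
      rcases mul_eq_zero.1 this with h | h
      · linarith
      · exact h
    have hb2 : w ^ 2 ≤ b ^ 2 := by linarith
    exact ⟨ha0, le_antisymm hbw ((sq_le_sq₀ hw.le hb).1 hb2)⟩

lemma D0_deriv (τ : ℝ) (z : ℂ) : HasDerivAt (D0 τ)
    (2 * z + 1 + ((23 / 3 : ℂ) * Complex.exp (-z * τ) +
      ((23 / 3 : ℂ) * z + 9) * (Complex.exp (-z * τ) * (-(τ : ℂ))))) z := by
  have h1 : HasDerivAt (fun z : ℂ => Complex.exp (-z * τ)) (Complex.exp (-z * τ) * (-(τ : ℂ))) z := by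
    have := (((hasDerivAt_id z).neg).mul_const (τ : ℂ)).cexp
    simpa using this
  have h2 : HasDerivAt (fun z : ℂ => (23 / 3 : ℂ) * z + 9) (23 / 3 : ℂ) z := by
    simpa using ((hasDerivAt_id z).const_mul (23 / 3 : ℂ)).add_const 9
  have h3 : HasDerivAt (fun z : ℂ => z ^ 2 + z) (2 * z + 1) z := by
    exact ((hasDerivAt_pow 2 z).add (hasDerivAt_id z)).congr_deriv (by simp)
  exact h3.add (h2.mul h1)

lemma D0_simple (τ y : ℝ) (hτ : 0 < τ) (hy : 59 < y ^ 2) (h : D0 τ (Complex.I * (y : ℂ)) = 0) :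
    ∃ c : ℂ, c ≠ 0 ∧ HasDerivAt (D0 τ) c (Complex.I * (y : ℂ)) := by
  refine ⟨_, ?_, D0_deriv τ _⟩
  intro hc
  obtain ⟨z, hzd⟩ : ∃ z, z = Complex.I * (y : ℂ) := ⟨_, rfl⟩
  rw [← hzd] at hc h
  unfold D0 at h
  have key : (23 / 3 : ℂ) * z ^ 2 + 18 * z + 9 + τ * (z ^ 2 + z) * ((23 / 3 : ℂ) * z + 9) = 0 := by
    linear_combination ((23 / 3 : ℂ) * z + 9) * hc - ((23 / 3 : ℂ) - τ * ((23 / 3 : ℂ) * z + 9)) * h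
  have key2 : (((9 - 23 / 3 * y ^ 2 - τ * (50 / 3 * y ^ 2) : ℝ)) : ℂ) +
      ((18 * y + τ * (9 * y - 23 / 3 * y ^ 3) : ℝ) : ℂ) * Complex.I = 0 := by
    rw [hzd] at key
    push_cast
    linear_combination key + (-(23 / 3 : ℂ) * y ^ 2 - τ * (50 / 3) * y ^ 2 - τ * (23 / 3) * y ^ 3 * Complex.I) * Complex.I_sq
  have hre := congrArg Complex.re key2
  rw [Complex.add_re, Complex.re_ofReal_mul, Complex.I_re, Complex.ofReal_re] at hre
  simp only [mul_zero, add_zero, Complex.zero_re] at hre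
  nlinarith [mul_pos hτ (by positivity : 0 < 50 / 3 * y ^ 2)]

lemma D1_simple (τ : ℝ) (hτ : 0 < τ) :
    ∃ c : ℂ, c ≠ 0 ∧ HasDerivAt (Dk epsStar τ 1) c 0 := by
  refine ⟨((pk epsStar 1 + sk - τ * qk epsStar 1 : ℝ) : ℂ), ?_, ?_⟩
  · rw [Complex.ofReal_ne_zero]
    have h0 := eps_pos
    have h1 := eps_lt
    have hX := X_gt
    have hq : qk epsStar 1 < 0 := by
      unfold qk; push_cast; nlinarith [mul_pos (sub_pos.2 h1) (by linarith : 0 < 4 * Real.pi ^ 2)]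
    have hp : 0 < pk epsStar 1 := by unfold pk; positivity
    have hs : 0 < sk := by norm_num [sk]
    nlinarith [mul_pos hτ (neg_pos.2 hq)]
  · have h1 : HasDerivAt (fun z : ℂ => Complex.exp (-z * τ)) (Complex.exp (-0 * τ) * (-(τ : ℂ))) 0 := by
      have := (((hasDerivAt_id (0 : ℂ)).neg).mul_const (τ : ℂ)).cexp
      simpa using this
    have h2 : HasDerivAt (fun z : ℂ => (sk : ℂ) * z + (qk epsStar 1 : ℂ)) (sk : ℂ) 0 := by
      simpa using ((hasDerivAt_id (0 : ℂ)).const_mul (sk : ℂ)).add_const (qk epsStar 1 : ℂ)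
    have h3 : HasDerivAt (fun z : ℂ => z ^ 2 + (pk epsStar 1 : ℂ) * z + (rk epsStar 1 : ℂ))
        (pk epsStar 1 : ℂ) 0 := by
      simpa using ((hasDerivAt_pow 2 (0 : ℂ)).add
        ((hasDerivAt_id (0 : ℂ)).const_mul (pk epsStar 1 : ℂ))).add_const (rk epsStar 1 : ℂ)
    have h4 := h3.add (h2.mul h1)
    refine h4.congr_deriv ?_
    simp
    ring

/-- At `τ = τ*` and `ε = ε*` (where `τ*` is the unique `τ ∈ (0, 2π/ω*)` with
`D_0(iω*; τ) = 0`): `D_1(0; τ*, ε*) = 0`, `D_0(±iω*; τ*) = 0`, these are the only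
characteristic roots in the closed right half plane, and the root `0` of `D_1` and the
roots `±iω*` of `D_0` are simple. -/
theorem turing_hopf_critical_spectrum (τs : ℝ)
    (hmem : τs ∈ Set.Ioo 0 (2 * Real.pi / omegaStar))
    (hτs : D0 τs (Complex.I * (omegaStar : ℂ)) = 0) :
    Dk epsStar τs 1 0 = 0 ∧
    D0 τs (Complex.I * (omegaStar : ℂ)) = 0 ∧
    D0 τs (-(Complex.I * (omegaStar : ℂ))) = 0 ∧
    (∀ k : ℕ, ∀ z : ℂ, 0 ≤ z.re → Dk epsStar τs k z = 0 →
      (k = 1 ∧ z = 0) ∨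
      (k = 0 ∧ (z = Complex.I * (omegaStar : ℂ) ∨ z = -(Complex.I * (omegaStar : ℂ))))) ∧
    (∃ c : ℂ, c ≠ 0 ∧ HasDerivAt (Dk epsStar τs 1) c 0) ∧
    (∃ c : ℂ, c ≠ 0 ∧ HasDerivAt (D0 τs) c (Complex.I * (omegaStar : ℂ))) ∧
    (∃ c : ℂ, c ≠ 0 ∧ HasDerivAt (D0 τs) c (-(Complex.I * (omegaStar : ℂ)))) := by
  obtain ⟨hτ0, -⟩ := id hmem
  have hconj : (starRingEnd ℂ) (Complex.I * (omegaStar : ℂ)) = -(Complex.I * (omegaStar : ℂ)) := by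
    simp
  have hneg : D0 τs (-(Complex.I * (omegaStar : ℂ))) = 0 := by
    rw [← hconj]; exact D0_conj _ _ hτs
  have hI : -(Complex.I * (omegaStar : ℂ)) = Complex.I * ((-omegaStar : ℝ) : ℂ) := by
    push_cast; ring
  refine ⟨?_, hτs, hneg, ?_, D1_simple τs hτ0, D0_simple τs _ hτ0 om_big hτs, ?_⟩
  · have h : rk epsStar 1 + qk epsStar 1 = 0 := by
      have := eps_eq
      unfold rk qk
      push_cast
      linear_combination this
    unfold Dk
    have h' : (rk epsStar 1 : ℂ) + (qk epsStar 1 : ℂ) = 0 := by exact_mod_cast h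
    simpa using h'
  · intro k z hz h
    rcases Nat.eq_zero_or_pos k with rfl | hk
    · right
      refine ⟨rfl, ?_⟩
      have h0 : D0 τs z = 0 := by
        rw [← h]; simp [D0, Dk, pk, rk, qk, sk]
      rcases le_total 0 z.im with hb | hb
      · exact Or.inl (D0_upper τs hmem hτs z hz hb h0)
      · right
        have := D0_upper τs hmem hτs ((starRingEnd ℂ) z) (by simpa using hz) (by simpa using hb)
          (D0_conj _ _ h0)
        rw [← hconj, ← this, Complex.conj_conj]
    · exact Or.inl (mode_zero τs hτ0.le k hk z hz h)
  · rw [hI] at hneg ⊢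
    exact D0_simple τs _ hτ0 (by rw [neg_sq]; exact om_big) hneg
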